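/- Let r ≥ 2 and m ≥ 1 be integers. Let H be a collection of n pairwise disjoint r-element subsets of ℤ. If for every r-pattern P every P-clique contained in H has size at most m, then n ≤ 2^{r−1}·(r−1)!·m^{2^r−1}. -/

import Mathlib

/-- A block `A^k B^k` (if `b = true`) or `B^k A^k` (if `b = false`), where `true` encodes
the letter A and `false` encodes the letter B. -/
def pblock (k : ℕ) (b : Bool) : List Bool :=
  if b then List.replicate k true ++ List.replicate k false
  else List.replicate k false ++ List.replicate k true

/-- An `r`-pattern: a string in `{A,B}^{2r}` starting with A, with `r` A's and `r` B's.
Here `true` encodes A and `false` encodes B. -/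
def IsPattern (r : ℕ) (P : List Bool) : Prop :=
  P.length = 2 * r ∧ P.count true = r ∧ P.head? = some true

/-- The pattern determined by the pair of disjoint finite sets `(e, f)`: list the elements of
`e ∪ f` in increasing order and record membership in `e` (A = `true`) vs `f` (B = `false`). -/
def patternOfPair (e f : Finset ℤ) : List Bool :=
  ((e ∪ f).sort (· ≤ ·)).map (fun x => decide (x ∈ e))

/-- The unordered pair `{e, f}` realizes the pattern `P`. -/
def Realizes (P : List Bool) (e f : Finset ℤ) : Prop :=
  patternOfPair e f = P ∨ patternOfPair f e = P

/-- A collection `S` is a `P`-clique if every pair of distinct members realizes the pattern `P`. -/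
def IsPClique (P : List Bool) (S : Finset (Finset ℤ)) : Prop :=
  ∀ e ∈ S, ∀ f ∈ S, e ≠ f → Realizes P e f

namespace OMR

open Finset

theorem indep_lemma {α : Type*} [DecidableEq α] (R : α → α → Prop) [DecidableRel R] (d : ℕ) :
    ∀ (n : ℕ) (S : Finset α), S.card = n → (∀ e ∈ S, R e e) →
      (∀ f ∈ S, (S.filter (fun e => R f e)).card ≤ d) →
      ∃ T ⊆ S, (∀ e ∈ T, ∀ f ∈ T, e ≠ f → ¬ R e f) ∧ S.card ≤ 2 * d * T.card := by
  intro n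
  induction n using Nat.strong_induction_on with
  | _ n ih =>
    intro S hn hrefl hd
    rcases S.eq_empty_or_nonempty with rfl | hne
    · exact ⟨∅, by simp, by simp, by simp⟩
    have hsum : ∑ e ∈ S, ((S.filter (fun f => R e f)).card + (S.filter (fun f => R f e)).card)
        ≤ ∑ e ∈ S, 2 * d := by
      rw [Finset.sum_add_distrib]
      have h1 : ∑ e ∈ S, (S.filter (fun f => R f e)).card
          = ∑ e ∈ S, (S.filter (fun f => R e f)).card := by
        simp only [Finset.card_filter]
        rw [Finset.sum_comm]
      rw [h1, ← two_mul, ← Finset.mul_sum]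
      have := Finset.sum_le_sum hd
      exact Nat.mul_le_mul_left 2 this
    obtain ⟨e, he, hle⟩ := Finset.exists_le_of_sum_le hne hsum
    set N := S.filter (fun f => R e f ∨ R f e) with hN
    have hNc : N.card ≤ 2 * d := by
      rw [hN, Finset.filter_or]
      exact (Finset.card_union_le _ _).trans hle
    have heN : e ∈ N := by simp [hN, he, hrefl e he]
    have hNS : N ⊆ S := Finset.filter_subset _ _
    have hlt : (S \ N).card < n := by
      rw [← hn]
      apply Finset.card_lt_card
      refine ⟨Finset.sdiff_subset, fun h => ?_⟩
      exact (Finset.mem_sdiff.1 (h he)).2 heN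
    obtain ⟨T, hTS, hT, hTc⟩ := ih _ hlt (S \ N) rfl
      (fun x hx => hrefl x (Finset.mem_sdiff.1 hx).1)
      (fun f hf => (Finset.card_le_card
        (Finset.filter_subset_filter _ Finset.sdiff_subset)).trans
          (hd f (Finset.mem_sdiff.1 hf).1))
    have hno : ∀ f ∈ T, ¬ R e f ∧ ¬ R f e := by
      intro f hf
      have := Finset.mem_sdiff.1 (hTS hf)
      have h2 := this.2
      rw [hN, Finset.mem_filter] at h2
      tauto
    have heT : e ∉ T := fun h => (hno e h).1 (hrefl e he)
    refine ⟨insert e T, ?_, ?_, ?_⟩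
    · exact Finset.insert_subset he (hTS.trans Finset.sdiff_subset)
    · intro a ha b hb hab
      rcases Finset.mem_insert.1 ha with rfl | ha
      · rcases Finset.mem_insert.1 hb with rfl | hb
        · exact absurd rfl hab
        · exact (hno b hb).1
      · rcases Finset.mem_insert.1 hb with hbe | hb
        · rw [hbe]; exact (hno a ha).2
        · exact hT a ha b hb hab
    · rw [Finset.card_insert_of_notMem heT]
      have := Finset.card_sdiff_add_card_eq_card hNS
      rw [mul_add]
      omega

open Classical in
theorem chain_lemma {α ι : Type*} (T : Finset α) (I : Finset ι) (lt : ι → α → α → Prop)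
    (htrans : ∀ s a b c, lt s a b → lt s b c → lt s a c)
    (hirr : ∀ s a, ¬ lt s a a)
    (hcomp : ∀ e ∈ T, ∀ f ∈ T, e ≠ f → ∃ s ∈ I, lt s e f ∨ lt s f e)
    (m : ℕ)
    (hchain : ∀ s ∈ I, ∀ Q ⊆ T, (∀ e ∈ Q, ∀ f ∈ Q, e ≠ f → lt s e f ∨ lt s f e) → Q.card ≤ m) :
    T.card ≤ m ^ I.card := by
  let F : ι → α → Finset (Finset α) := fun s t => T.powerset.filter (fun Q =>
    (∀ e ∈ Q, ∀ f ∈ Q, e ≠ f → lt s e f ∨ lt s f e) ∧ t ∈ Q ∧ ∀ q ∈ Q, q ≠ t → lt s q t)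
  let h : ι → α → ℕ := fun s t => (F s t).sup Finset.card
  have hF : ∀ s t, ∀ Q ∈ F s t, Q ⊆ T ∧ (∀ e ∈ Q, ∀ f ∈ Q, e ≠ f → lt s e f ∨ lt s f e) ∧
      t ∈ Q ∧ ∀ q ∈ Q, q ≠ t → lt s q t := by
    intro s t Q hQ
    simpa [F] using hQ
  have hsing : ∀ s, ∀ t ∈ T, {t} ∈ F s t := by
    intro s t ht
    simp [F, ht]
  have h1 : ∀ s, ∀ t ∈ T, 1 ≤ h s t := by
    intro s t ht
    have := Finset.le_sup (f := Finset.card) (hsing s t ht)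
    rwa [Finset.card_singleton] at this
  have h2 : ∀ s ∈ I, ∀ t, h s t ≤ m := by
    intro s hs t
    apply Finset.sup_le
    intro Q hQ
    have := hF s t Q hQ
    exact hchain s hs Q this.1 this.2.1
  have h3 : ∀ s, ∀ a ∈ T, ∀ b ∈ T, lt s a b → h s a < h s b := by
    intro s a ha b hb hab
    obtain ⟨Q, hQ, hQe⟩ := Finset.exists_mem_eq_sup (F s a) ⟨_, hsing s a ha⟩ Finset.card
    obtain ⟨q1, q2, q3, q4⟩ := hF s a Q hQ
    have hall : ∀ q ∈ Q, lt s q b := by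
      intro q hq
      by_cases hqa : q = a
      · rw [hqa]; exact hab
      · exact htrans s _ _ _ (q4 q hq hqa) hab
    have hbQ : b ∉ Q := fun hbQ => hirr s b (hall b hbQ)
    have hins : insert b Q ∈ F s b := by
      simp only [F, Finset.mem_filter, Finset.mem_powerset]
      refine ⟨Finset.insert_subset hb q1, ?_, Finset.mem_insert_self _ _, ?_⟩
      · intro e he f hf hef
        rcases Finset.mem_insert.1 he with rfl | he
        · rcases Finset.mem_insert.1 hf with rfl | hf
          · exact absurd rfl hef
          · exact Or.inr (hall f hf)
        · rcases Finset.mem_insert.1 hf with hfe | hf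
          · rw [hfe]; exact Or.inl (hall e he)
          · exact q2 e he f hf hef
      · intro q hq hqb
        rcases Finset.mem_insert.1 hq with rfl | hq
        · exact absurd rfl hqb
        · exact hall q hq
    have hle := Finset.le_sup (f := Finset.card) hins
    rw [Finset.card_insert_of_notMem hbQ] at hle
    change (F s a).sup Finset.card < (F s b).sup Finset.card
    omega
  have hc : T.card ≤ (Fintype.piFinset (fun _ : I => Finset.Icc 1 m)).card := by
    apply Finset.card_le_card_of_injOn (fun t => fun s : I => h s t)
    · intro t ht
      rw [Finset.mem_coe, Fintype.mem_piFinset]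
      intro s
      exact Finset.mem_Icc.2 ⟨h1 s t ht, h2 s s.2 t⟩
    · intro a ha b hb hab
      by_contra hne
      obtain ⟨s, hs, hlt⟩ := hcomp a ha b hb hne
      have hab' : h s a = h s b := congrFun hab ⟨s, hs⟩
      rcases hlt with hlt | hlt
      · have := h3 s a ha b hb hlt
        omega
      · have := h3 s b hb a ha hlt
        omega
  rw [Fintype.card_piFinset] at hc
  simpa using hc

/-- `p` enumerates `e` increasingly. -/
def Enum {r : ℕ} (p : Fin r → ℤ) (e : Finset ℤ) : Prop :=
  StrictMono p ∧ ∀ x, x ∈ e ↔ ∃ i, p i = x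

open Classical in
theorem pattern_inv {r : ℕ} [NeZero r] {p q p' q' : Fin r → ℤ} {e f e' f' : Finset ℤ}
    (hp : Enum p e) (hq : Enum q f) (hp' : Enum p' e') (hq' : Enum q' f')
    (hd : Disjoint e f) (hd' : Disjoint e' f')
    (h : ∀ i k, p i < q k ↔ p' i < q' k) : patternOfPair e f = patternOfPair e' f' := by
  have mp : ∀ i, p i ∈ e := fun i => (hp.2 _).2 ⟨i, rfl⟩
  have mq : ∀ i, q i ∈ f := fun i => (hq.2 _).2 ⟨i, rfl⟩
  have mp' : ∀ i, p' i ∈ e' := fun i => (hp'.2 _).2 ⟨i, rfl⟩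
  have mq' : ∀ i, q' i ∈ f' := fun i => (hq'.2 _).2 ⟨i, rfl⟩
  have nq : ∀ i, q i ∉ e := fun i hi => Finset.disjoint_left.1 hd hi (mq i)
  have nq' : ∀ i, q' i ∉ e' := fun i hi => Finset.disjoint_left.1 hd' hi (mq' i)
  let φ : ℤ → ℤ := fun x => if x ∈ e then p' (Function.invFun p x) else q' (Function.invFun q x)
  have φp : ∀ i, φ (p i) = p' i := by
    intro i
    simp only [φ, mp i, if_true]
    rw [Function.leftInverse_invFun hp.1.injective]
  have φq : ∀ i, φ (q i) = q' i := by
    intro i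
    simp only [φ, nq i, if_false]
    rw [Function.leftInverse_invFun hq.1.injective]
  have hmono : ∀ x ∈ e ∪ f, ∀ y ∈ e ∪ f, x < y → φ x < φ y := by
    intro x hx y hy hxy
    rcases Finset.mem_union.1 hx with hx | hx <;> rcases Finset.mem_union.1 hy with hy | hy
    · obtain ⟨i, rfl⟩ := (hp.2 _).1 hx
      obtain ⟨k, rfl⟩ := (hp.2 _).1 hy
      rw [φp, φp]
      exact hp'.1 (hp.1.lt_iff_lt.1 hxy)
    · obtain ⟨i, rfl⟩ := (hp.2 _).1 hx
      obtain ⟨k, rfl⟩ := (hq.2 _).1 hy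
      rw [φp, φq]
      exact (h i k).1 hxy
    · obtain ⟨i, rfl⟩ := (hq.2 _).1 hx
      obtain ⟨k, rfl⟩ := (hp.2 _).1 hy
      rw [φp, φq]
      have h1 : ¬ p' k < q' i := fun h1 => by
        have := (h k i).2 h1
        omega
      have h2 : p' k ≠ q' i := fun h2 => nq' i (h2 ▸ mp' k)
      omega
    · obtain ⟨i, rfl⟩ := (hq.2 _).1 hx
      obtain ⟨k, rfl⟩ := (hq.2 _).1 hy
      rw [φq, φq]
      exact hq'.1 (hq.1.lt_iff_lt.1 hxy)
  have hmem : ∀ y, (∃ x ∈ e ∪ f, φ x = y) ↔ y ∈ e' ∪ f' := by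
    intro y
    constructor
    · rintro ⟨x, hx, rfl⟩
      rcases Finset.mem_union.1 hx with hx | hx
      · obtain ⟨i, rfl⟩ := (hp.2 _).1 hx
        rw [φp]; exact Finset.mem_union_left _ (mp' i)
      · obtain ⟨i, rfl⟩ := (hq.2 _).1 hx
        rw [φq]; exact Finset.mem_union_right _ (mq' i)
    · intro hy
      rcases Finset.mem_union.1 hy with hy | hy
      · obtain ⟨i, rfl⟩ := (hp'.2 _).1 hy
        exact ⟨p i, Finset.mem_union_left _ (mp i), φp i⟩
      · obtain ⟨i, rfl⟩ := (hq'.2 _).1 hy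
        exact ⟨q i, Finset.mem_union_right _ (mq i), φq i⟩
  have hs : ((e ∪ f).sort (· ≤ ·)).Pairwise (· < ·) := (Finset.sortedLT_sort _).pairwise
  have hs' : ((e' ∪ f').sort (· ≤ ·)).Pairwise (· < ·) := (Finset.sortedLT_sort _).pairwise
  have hms : (((e ∪ f).sort (· ≤ ·)).map φ).Pairwise (· < ·) := by
    rw [List.pairwise_map]
    refine hs.imp_of_mem ?_
    intro a b ha hb hab
    exact hmono a ((Finset.mem_sort _).1 ha) b ((Finset.mem_sort _).1 hb) hab
  have heq : ((e ∪ f).sort (· ≤ ·)).map φ = (e' ∪ f').sort (· ≤ ·) := by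
    apply List.Perm.eq_of_pairwise (le := (· < ·)) _ hms hs'
    · rw [List.perm_ext_iff_of_nodup (hms.imp (fun h => ne_of_lt h)) (Finset.sort_nodup _ _)]
      intro y
      rw [List.mem_map, Finset.mem_sort, ← hmem y]
      simp only [Finset.mem_sort]
    · intro a b _ _ h1 h2
      exact absurd h1 (not_lt.2 h2.le)
  unfold patternOfPair
  rw [← heq, List.map_map]
  apply List.map_congr_left
  intro x hx
  rw [Finset.mem_sort] at hx
  simp only [Function.comp]
  rcases Finset.mem_union.1 hx with hx | hx
  · obtain ⟨i, rfl⟩ := (hp.2 _).1 hx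
    simp [φp, mp, mp']
  · obtain ⟨i, rfl⟩ := (hq.2 _).1 hx
    simp [φq, nq, nq']

theorem pattern_isPattern {r : ℕ} [NeZero r] {p q : Fin r → ℤ} {e f : Finset ℤ}
    (hp : Enum p e) (hq : Enum q f) (hce : e.card = r) (hcf : f.card = r)
    (hd : Disjoint e f) (h : p 0 < q 0) : IsPattern r (patternOfPair e f) := by
  refine ⟨?_, ?_, ?_⟩
  · simp [patternOfPair, Finset.card_union_of_disjoint hd, hce, hcf, two_mul]
  · have h1 : (patternOfPair e f).count true
        = (((e ∪ f).sort (· ≤ ·)).filter (fun x => decide (x ∈ e))).length := by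
      unfold patternOfPair
      rw [List.count, List.countP_map, List.countP_eq_length_filter]
      congr 1
      apply List.filter_congr
      intro x _
      simp
    have hnd : (((e ∪ f).sort (· ≤ ·)).filter (fun x => decide (x ∈ e))).Nodup :=
      (Finset.sort_nodup _ _).filter _
    rw [h1, ← List.toFinset_card_of_nodup hnd]
    have : (((e ∪ f).sort (· ≤ ·)).filter (fun x => decide (x ∈ e))).toFinset = e := by
      ext x
      simp
    rw [this, hce]
  · have hs := (Finset.sortedLT_sort (e ∪ f)).pairwise
    have hmem : ∀ x, x ∈ (e ∪ f).sort (· ≤ ·) ↔ x ∈ e ∪ f := fun x => Finset.mem_sort _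
    unfold patternOfPair
    have p0 : p 0 ∈ e := (hp.2 _).2 ⟨0, rfl⟩
    cases hL : (e ∪ f).sort (· ≤ ·) with
    | nil =>
      have := (hmem (p 0)).2 (Finset.mem_union_left _ p0)
      rw [hL] at this
      simp at this
    | cons a l =>
      rw [hL] at hs hmem
      have ha : a ∈ e := by
        rcases Finset.mem_union.1 ((hmem a).1 (by simp)) with ha | ha
        · exact ha
        · exfalso
          obtain ⟨k, rfl⟩ := (hq.2 _).1 ha
          have h0 : q 0 ≤ q k := hq.1.monotone (Fin.zero_le k)
          have := (hmem (p 0)).2 (Finset.mem_union_left _ p0)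
          rcases List.mem_cons.1 this with h1 | h1
          · omega
          · have := (List.pairwise_cons.1 hs).1 _ h1
            omega
      simp [ha]

/-- start of the block of `i` -/
noncomputable def start {r : ℕ} [NeZero r] (C : Finset (Fin r)) (i : Fin r) : Fin r :=
  (C.filter (· ≤ i)).sup id

section blocks
variable {r : ℕ} [NeZero r] {C : Finset (Fin r)}

theorem start_le (i : Fin r) : start C i ≤ i := by
  apply Finset.sup_le
  intro b hb
  exact (Finset.mem_filter.1 hb).2

theorem le_start {c i : Fin r} (hc : c ∈ C) (h : c ≤ i) : c ≤ start C i :=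
  Finset.le_sup (f := id) (Finset.mem_filter.2 ⟨hc, h⟩)

theorem start_mem (i : Fin r) : start C i = 0 ∨ start C i ∈ C := by
  rcases (C.filter (· ≤ i)).eq_empty_or_nonempty with h | h
  · left
    unfold start
    rw [h]
    rfl
  · right
    obtain ⟨b, hb, hbe⟩ := Finset.exists_mem_eq_sup _ h id
    unfold start
    rw [hbe]
    exact (Finset.mem_filter.1 hb).1

theorem start_of_mem {c : Fin r} (hc : c ∈ C) : start C c = c :=
  le_antisymm (start_le c) (le_start hc le_rfl)

theorem start_zero : start C 0 = 0 := le_antisymm (start_le 0) (Fin.zero_le _)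

theorem start_start (i : Fin r) : start C (start C i) = start C i := by
  rcases start_mem (C := C) i with h | h
  · rw [h, start_zero]
  · exact start_of_mem h

theorem start_mono {i k : Fin r} (h : i ≤ k) : start C i ≤ start C k := by
  apply Finset.sup_mono
  intro x hx
  rw [Finset.mem_filter] at hx ⊢
  exact ⟨hx.1, hx.2.trans h⟩

/-- cut at `c` with value `x` -/
def Cut (p : Fin r → ℤ) (c : Fin r) (x : ℤ) : Prop :=
  (∀ i, i < c → p i ≤ x) ∧ ∀ i, c ≤ i → x < p i

theorem cross {p q : Fin r → ℤ} {x : Fin r → ℤ} (hp : ∀ c ∈ C, Cut p c (x c))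
    (hq : ∀ c ∈ C, Cut q c (x c)) {i k : Fin r} (h : start C i < start C k) : p i < q k := by
  have hc : start C k ∈ C := by
    rcases start_mem (C := C) k with h0 | h0
    · rw [h0] at h
      exact absurd h (not_lt.2 (Fin.zero_le _))
    · exact h0
  have hi : i < start C k := by
    by_contra hcon
    exact absurd (le_start hc (not_lt.1 hcon)) (not_le.2 h)
  exact ((hp _ hc).1 i hi).trans_lt ((hq _ hc).2 k (start_le k))

/-- new cut -/
theorem new_cut {p : Fin r → ℤ} (hp : StrictMono p) (y : ℤ) (b k : Fin r)
    (hb : start C k = b) (h1 : p b ≤ y) (h2 : y < p k) :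
    ∃ c, c ∉ insert 0 C ∧ start C c = b ∧ Cut p c y := by
  have hne : (Finset.univ.filter (fun c => start C c = b ∧ y < p c)).Nonempty :=
    ⟨k, by simp [hb, h2]⟩
  set c := (Finset.univ.filter (fun c => start C c = b ∧ y < p c)).min' hne with hc
  have hcm := Finset.min'_mem _ hne
  rw [← hc] at hcm
  simp only [Finset.mem_filter, Finset.mem_univ, true_and] at hcm
  refine ⟨c, ?_, hcm.1, ?_, ?_⟩
  · intro hmem
    have : start C c = c := by
      rcases Finset.mem_insert.1 hmem with h | h
      · rw [h, start_zero]
      · exact start_of_mem h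
    rw [hcm.1] at this
    rw [← this] at hcm
    omega
  · intro i hi
    by_cases hib : i ≤ b
    · exact (hp.monotone hib).trans h1
    · have hs : start C i = b := by
        apply le_antisymm
        · rw [← hcm.1]; exact start_mono hi.le
        · rw [← hb, ← start_start, hb]
          exact start_mono (not_le.1 hib).le
      by_contra hcon
      have := Finset.min'_le (Finset.univ.filter (fun c => start C c = b ∧ y < p c)) i
        (by simp only [Finset.mem_filter, Finset.mem_univ, true_and]; exact ⟨hs, not_le.1 hcon⟩)
      exact absurd hi (not_lt.2 this)
  · intro i hi
    exact hcm.2.trans_le (hp.monotone hi)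

/-- `q` hits `p` -/
def Hit (C : Finset (Fin r)) (q p : Fin r → ℤ) : Prop :=
  ∃ c, c ∉ insert 0 C ∧ Cut p c (q (start C c))

/-- sign-vector order -/
def SLt (C σ : Finset (Fin r)) (p q : Fin r → ℤ) : Prop :=
  ∀ i k, start C i = start C k → if start C i ∈ σ then q k < p i else p i < q k

theorem SLt.trans {σ : Finset (Fin r)} {p q s : Fin r → ℤ} (h1 : SLt C σ p q) (h2 : SLt C σ q s) :
    SLt C σ p s := by
  intro i k hik
  have a := h1 i i rfl
  have b := h2 i k hik
  split_ifs at a b ⊢ <;> omega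

theorem SLt.irr {σ : Finset (Fin r)} {p : Fin r → ℤ} : ¬ SLt C σ p p := by
  intro h
  have := h 0 0 rfl
  split_ifs at this <;> omega

theorem SLt.iff {σ : Finset (Fin r)} {p q p' q' : Fin r → ℤ} {x : Fin r → ℤ}
    (hp : ∀ c ∈ C, Cut p c (x c)) (hq : ∀ c ∈ C, Cut q c (x c))
    (hp' : ∀ c ∈ C, Cut p' c (x c)) (hq' : ∀ c ∈ C, Cut q' c (x c))
    (h : SLt C σ p q) (h' : SLt C σ p' q') (i k : Fin r) : p i < q k ↔ p' i < q' k := by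
  rcases lt_trichotomy (start C i) (start C k) with hs | hs | hs
  · exact iff_of_true (cross hp hq hs) (cross hp' hq' hs)
  · have a := h i k hs
    have b := h' i k hs
    split_ifs at a b
    · exact iff_of_false (by omega) (by omega)
    · exact iff_of_true a b
  · exact iff_of_false (not_lt.2 (cross hq hp hs).le) (not_lt.2 (cross hq' hp' hs).le)

theorem block_sep {p q : Fin r → ℤ} (hp : StrictMono p) (hq : StrictMono q)
    (hne : ∀ i k, p i ≠ q k) (h1 : ¬ Hit C p q) (h2 : ¬ Hit C q p) (b : Fin r)
    (hb : start C b = b) :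
    (∀ i k, start C i = b → start C k = b → p i < q k) ∨
    (∀ i k, start C i = b → start C k = b → q k < p i) := by
  have mn : ∀ i, start C i = b → b ≤ i := fun i hi => hi ▸ start_le i
  rcases lt_or_gt_of_ne (hne b b) with h | h
  · left
    intro i k hi hk
    by_contra hcon
    have h3 := hne i k
    have h4 := hq.monotone (mn k hk)
    obtain ⟨c, hc, hs, hcut⟩ := new_cut hp (q b) b i hi h.le (by omega)
    exact h2 ⟨c, hc, by rw [hs]; exact hcut⟩
  · right
    intro i k hi hk
    by_contra hcon
    have h3 := hne i k
    have h4 := hp.monotone (mn i hi)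
    obtain ⟨c, hc, hs, hcut⟩ := new_cut hq (p b) b k hk h.le (by omega)
    exact h1 ⟨c, hc, by rw [hs]; exact hcut⟩

open Classical in
theorem sep_comp {p q : Fin r → ℤ} (hC : 0 ∉ C) (hp : StrictMono p) (hq : StrictMono q)
    (hne : ∀ i k, p i ≠ q k) (h1 : ¬ Hit C p q) (h2 : ¬ Hit C q p) :
    ∃ σ ∈ C.powerset, SLt C σ p q ∨ SLt C σ q p := by
  wlog h0 : p 0 < q 0 generalizing p q
  · obtain ⟨σ, hσ, h⟩ := this hq hp (fun i k => (hne k i).symm) h2 h1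
      (by have := hne 0 0; omega)
    exact ⟨σ, hσ, h.symm⟩
  refine ⟨C.filter (fun b => q b < p b), by simp, Or.inl ?_⟩
  intro i k hik
  have hb := start_start (C := C) i
  have key := block_sep hp hq hne h1 h2 (start C i) hb
  split_ifs with hmem
  · have hlt := (Finset.mem_filter.1 hmem).2
    rcases key with key | key
    · have := key _ _ hb hb
      omega
    · exact key i k rfl hik.symm
  · rcases key with key | key
    · exact key i k rfl hik.symm
    · exfalso
      have hlt := key _ _ hb hb
      rcases start_mem (C := C) i with h | h
      · rw [h] at hlt
        omega
      · exact hmem (Finset.mem_filter.2 ⟨h, hlt⟩)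

theorem hit_self {p : Fin r → ℤ} (hp : StrictMono p) (hC : insert 0 C ≠ Finset.univ) :
    Hit C p p := by
  obtain ⟨k, hk⟩ : ∃ k, k ∉ insert 0 C := by
    by_contra hcon
    push Not at hcon
    exact hC (Finset.eq_univ_iff_forall.2 hcon)
  have hlt : start C k < k := by
    refine lt_of_le_of_ne (start_le k) (fun h => hk ?_)
    rw [Finset.mem_insert]
    rcases start_mem (C := C) k with h' | h'
    · left; rw [← h, h']
    · right; rw [← h]; exact h'
  obtain ⟨c, hc, hs, hcut⟩ := new_cut hp (p (start C k)) (start C k) k rfl le_rfl (hp hlt)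
  exact ⟨c, hc, by rw [hs]; exact hcut⟩

end blocks

open Classical in
theorem main {r : ℕ} [NeZero r] (m : ℕ) (hm : 1 ≤ m) (H : Finset (Finset ℤ))
    (hcard : ∀ e ∈ H, e.card = r)
    (hdisj : ∀ e ∈ H, ∀ f ∈ H, e ≠ f → Disjoint e f)
    (hclique : ∀ P : List Bool, IsPattern r P → ∀ S ⊆ H, IsPClique P S → S.card ≤ m)
    (p : Finset ℤ → Fin r → ℤ) (hpe : ∀ e ∈ H, Enum (p e) e) :
    ∀ (t E : ℕ) (C : Finset (Fin r)) (x : Fin r → ℤ) (S : Finset (Finset ℤ)),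
      0 ∉ C → C.card + 1 + t = r → E + 2 ^ C.card = 2 ^ r → S ⊆ H →
      (∀ e ∈ S, ∀ c ∈ C, Cut (p e) c (x c)) →
      S.card ≤ 2 ^ t * Nat.factorial t * m ^ E := by
  have hne : ∀ e ∈ H, ∀ f ∈ H, e ≠ f → ∀ i k, p e i ≠ p f k := by
    intro e he f hf hef i k hik
    have h1 : p e i ∈ e := ((hpe e he).2 _).2 ⟨i, rfl⟩
    have h2 : p e i ∈ f := ((hpe f hf).2 _).2 ⟨k, hik.symm⟩
    exact Finset.disjoint_left.1 (hdisj e he f hf hef) h1 h2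
  have hindep : ∀ (C : Finset (Fin r)) (x : Fin r → ℤ) (T : Finset (Finset ℤ)),
      0 ∉ C → T ⊆ H → (∀ e ∈ T, ∀ c ∈ C, Cut (p e) c (x c)) →
      (∀ e ∈ T, ∀ f ∈ T, e ≠ f → ¬ Hit C (p e) (p f)) → T.card ≤ m ^ (2 ^ C.card) := by
    intro C x T hC hT hcut hno
    rw [← Finset.card_powerset]
    refine chain_lemma T C.powerset (fun σ e f => SLt C σ (p e) (p f))
      (fun _ _ _ _ h1 h2 => h1.trans h2) (fun _ _ => SLt.irr) ?_ m ?_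
    · intro e he f hf hef
      exact sep_comp hC (hpe e (hT he)).1 (hpe f (hT hf)).1 (hne e (hT he) f (hT hf) hef)
        (hno e he f hf hef) (hno f hf e he hef.symm)
    · intro σ hσ Q hQ hch
      by_cases h : ∃ e ∈ Q, ∃ f ∈ Q, e ≠ f ∧ SLt C σ (p e) (p f)
      · obtain ⟨e, he, f, hf, hef, hlt⟩ := h
        have hQH := hQ.trans hT
        have hinv : ∀ a ∈ Q, ∀ b ∈ Q, a ≠ b → SLt C σ (p a) (p b) →
            patternOfPair a b = patternOfPair e f := by
          intro a ha b hb hab hl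
          exact pattern_inv (hpe a (hQH ha)) (hpe b (hQH hb)) (hpe e (hQH he)) (hpe f (hQH hf))
            (hdisj a (hQH ha) b (hQH hb) hab) (hdisj e (hQH he) f (hQH hf) hef)
            (SLt.iff (hcut a (hQ ha)) (hcut b (hQ hb)) (hcut e (hQ he)) (hcut f (hQ hf)) hl hlt)
        refine hclique (patternOfPair e f) ?_ Q hQH ?_
        · refine pattern_isPattern (hpe e (hQH he)) (hpe f (hQH hf)) (hcard e (hQH he))
            (hcard f (hQH hf)) (hdisj e (hQH he) f (hQH hf) hef) ?_
          have := hlt 0 0 rfl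
          rw [start_zero, if_neg (fun h0 => hC (Finset.mem_powerset.1 hσ h0))] at this
          exact this
        · intro a ha b hb hab
          rcases hch a ha b hb hab with h1 | h1
          · exact Or.inl (hinv a ha b hb hab h1)
          · exact Or.inr (hinv b hb a ha hab.symm h1)
      · refine le_trans (Finset.card_le_one.2 ?_) hm
        intro a ha b hb
        by_contra hab
        rcases hch a ha b hb hab with h1 | h1
        · exact h ⟨a, ha, b, hb, hab, h1⟩
        · exact h ⟨b, hb, a, ha, fun h => hab h.symm, h1⟩
  intro t
  induction t with
  | zero =>
    intro E C x S hC hCr hE hS hcut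
    have huniv : insert 0 C = Finset.univ := by
      apply Finset.eq_univ_of_card
      rw [Finset.card_insert_of_notMem hC, Fintype.card_fin]
      omega
    have := hindep C x S hC hS hcut (by
      rintro e _ f _ _ ⟨c, hc, _⟩
      rw [huniv] at hc
      exact hc (Finset.mem_univ _))
    have hEE : E = 2 ^ C.card := by
      have : 2 ^ r = 2 ^ C.card * 2 := by rw [← pow_succ]; congr 1; omega
      omega
    simpa [hEE] using this
  | succ t ih =>
    intro E C x S hC hCr hE hS hcut
    obtain ⟨E', hE'⟩ : ∃ E', E' + 2 ^ (C.card + 1) = 2 ^ r := by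
      have : 2 ^ (C.card + 1) ≤ 2 ^ r := Nat.pow_le_pow_right (by norm_num) (by omega)
      exact ⟨2 ^ r - 2 ^ (C.card + 1), by omega⟩
    have hEE : E = E' + 2 ^ C.card := by
      rw [pow_succ] at hE'
      omega
    set D := 2 ^ t * Nat.factorial t * m ^ E' with hD
    have hcc : (insert 0 C).card = C.card + 1 := Finset.card_insert_of_notMem hC
    have hcompl : ((insert 0 C)ᶜ : Finset (Fin r)).card = t + 1 := by
      rw [Finset.card_compl, hcc, Fintype.card_fin]
      omega
    have hnu : insert 0 C ≠ Finset.univ := by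
      intro h
      rw [h] at hcompl
      simp at hcompl
    have hdeg : ∀ f ∈ S, (S.filter (fun e => Hit C (p f) (p e))).card ≤ (t + 1) * D := by
      intro f hf
      have hsub : S.filter (fun e => Hit C (p f) (p e)) ⊆
          ((insert 0 C)ᶜ : Finset (Fin r)).biUnion
            (fun c => S.filter (fun e => Cut (p e) c (p f (start C c)))) := by
        intro e he
        obtain ⟨he, c, hc, hcc⟩ := Finset.mem_filter.1 he
        rw [Finset.mem_biUnion]
        exact ⟨c, Finset.mem_compl.2 hc, Finset.mem_filter.2 ⟨he, hcc⟩⟩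
      refine (Finset.card_le_card hsub).trans ?_
      rw [← hcompl]
      apply Finset.card_biUnion_le_card_mul
      intro c hc
      rw [Finset.mem_compl, Finset.mem_insert, not_or] at hc
      have hci : (insert c C).card = C.card + 1 := Finset.card_insert_of_notMem hc.2
      refine ih E' (insert c C) (Function.update x c (p f (start C c))) _ ?_ ?_ ?_ ?_ ?_
      · rw [Finset.mem_insert, not_or]
        exact ⟨fun h => hc.1 h.symm, hC⟩
      · omega
      · rw [hci]; exact hE'
      · exact (Finset.filter_subset _ _).trans hS
      · intro e he c' hc'
        obtain ⟨heS, hec⟩ := Finset.mem_filter.1 he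
        rcases Finset.mem_insert.1 hc' with rfl | hc'
        · rw [Function.update_self]; exact hec
        · have hcn : c' ≠ c := fun h => hc.2 (h ▸ hc')
          rw [Function.update_of_ne hcn]
          exact hcut e heS c' hc'
    obtain ⟨T, hTS, hT, hTc⟩ := indep_lemma (fun f e => Hit C (p f) (p e)) ((t + 1) * D) _ S rfl
      (fun e he => hit_self (hpe e (hS he)).1 hnu) hdeg
    have hTb := hindep C x T hC (hTS.trans hS) (fun e he => hcut e (hTS he)) hT
    calc S.card ≤ 2 * ((t + 1) * D) * T.card := hTc
      _ ≤ 2 * ((t + 1) * D) * m ^ (2 ^ C.card) := Nat.mul_le_mul_left _ hTb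
      _ = 2 ^ (t + 1) * Nat.factorial (t + 1) * m ^ E := by
        rw [hEE, hD, Nat.factorial_succ, pow_succ, pow_add]
        ring

end OMR

/-- **Main upper bound.** If every `P`-clique of a collection `H` of `n` pairwise disjoint
`r`-element subsets of `ℤ` has size at most `m` (for every `r`-pattern `P`), then
`n ≤ 2^(r-1) · (r-1)! · m^(2^r - 1)`. -/
theorem ordered_matching_ramsey_upper (r m : ℕ) (hr : 2 ≤ r) (hm : 1 ≤ m)
    (H : Finset (Finset ℤ))
    (hcard : ∀ e ∈ H, e.card = r)
    (hdisj : ∀ e ∈ H, ∀ f ∈ H, e ≠ f → Disjoint e f)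
    (hclique : ∀ P : List Bool, IsPattern r P → ∀ S ⊆ H, IsPClique P S → S.card ≤ m) :
    H.card ≤ 2 ^ (r - 1) * Nat.factorial (r - 1) * m ^ (2 ^ r - 1) := by
  have : NeZero r := ⟨by omega⟩
  have hex : ∀ e : Finset ℤ, ∃ p : Fin r → ℤ, e ∈ H → OMR.Enum p e := by
    intro e
    by_cases he : e ∈ H
    · refine ⟨e.orderEmbOfFin (hcard e he), fun _ => ⟨(e.orderEmbOfFin (hcard e he)).strictMono, ?_⟩⟩
      intro x
      have := Finset.range_orderEmbOfFin e (hcard e he)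
      rw [← Finset.mem_coe, ← this]
      rfl
    · exact ⟨fun _ => 0, fun h => absurd h he⟩
  choose p hp using hex
  have h2 : 1 ≤ 2 ^ r := Nat.one_le_two_pow
  refine OMR.main m hm H hcard hdisj hclique p hp (r - 1) (2 ^ r - 1) ∅ (fun _ => 0) H
    (by simp) (by simp; omega) (by simp; omega) subset_rfl (by simp)
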